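/- Let Γ be a countable group and Γ↷(X,μ) an ergodic measure-preserving Borel action on a standard probability space. Then there exist a compact metric space (K,d_K), a Borel probability measure κ on K, and an action of Γ on K by homeomorphisms such that (i) Γ↷(X,μ) is measurably conjugate to Γ↷(K,κ), and (ii) for every ε > 0 and all x,y ∈ K, κ(B̄(x,ε)) ≤ 3·κ(B̄(y,ε)), where B̄(x,ε) = {z ∈ K : d_K(x,z) ≤ ε} (equivalently 1/3 ≤ κ(B̄(x,ε))/κ(B̄(y,ε)) ≤ 3). -/

import Mathlib

/-- A topological model of a measure-preserving action `aX` of `Γ` on `(X,μ)`: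
a compact metric space `K` with its Borel σ-algebra, a Borel probability measure `κ`,
an action of `Γ` on `K` by homeomorphisms which is measurably conjugate to `aX`, and in
which all closed balls of equal radius have comparable measure (within a factor `3`). -/
structure TopologicalModel (Γ : Type) [Group Γ] {X : Type} [MeasurableSpace X]
    (μ : MeasureTheory.Measure X) (aX : Γ → X → X) where
  K : Type
  [mK : MetricSpace K]
  [mbK : MeasurableSpace K]
  borel : BorelSpace K
  compact : CompactSpace K
  κ : MeasureTheory.Measure K
  prob : MeasureTheory.IsProbabilityMeasure κ
  act : Γ → K → K
  cont : ∀ g : Γ, Continuous (act g)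
  act_one : ∀ k : K, act 1 k = k
  act_mul : ∀ (g h : Γ) (k : K), act (g * h) k = act g (act h k)
  pmp : ∀ g : Γ, κ.map (act g) = κ
  X' : Set X
  K' : Set K
  φ : X → K
  ψ : K → X
  measX' : MeasurableSet X'
  measK' : MeasurableSet K'
  conullX' : μ X'ᶜ = 0
  conullK' : κ K'ᶜ = 0
  invX' : ∀ g : Γ, aX g '' X' = X'
  invK' : ∀ g : Γ, act g '' K' = K'
  measφ : Measurable φ
  measψ : Measurable ψ
  mapsφ : ∀ x ∈ X', φ x ∈ K'
  leftInv : ∀ x ∈ X', ψ (φ x) = x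
  mapsψ : ∀ k ∈ K', ψ k ∈ X'
  rightInv : ∀ k ∈ K', φ (ψ k) = k
  pushforward : μ.map φ = κ
  equivariant : ∀ g : Γ, ∀ x ∈ X', φ (aX g x) = act g (φ x)
  ball_comparable : ∀ ε : ℝ, 0 < ε → ∀ x y : K,
    κ (Metric.closedBall x ε) ≤ 3 * κ (Metric.closedBall y ε)

open MeasureTheory Filter Set

/-!
An atom of an ergodic action has a finite conull orbit carrying the normalised counting measure, and
the discrete metric works. The substance is the atomless case.

Let `A 0, A 1, …` enumerate the translates of a countable generating family of measurable sets, and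
let `raw A n` be the finite partition generated by the first `n` of them. The raw partitions separate
points, and the preimage of a raw partition under a group element is refined by a later raw
partition. After removing an invariant null set, every raw class has positive measure; and since
there are no atoms, the classes become uniformly small (`exists_raw_small`).

The raw partitions are replaced by balanced ones, `p 0, p 1, …`, with `p 0` trivial. Given `p n`,
let `r` be the common refinement of `p n` and `raw A n`, and let `b > 0` be a lower bound for the
measures of its classes. Pass to a raw partition finer than `r` with classes of measure below `b`, and
group its classes inside each class of `r` into sets of measure in `[b, 3b]`
(`exists_regrouping`, `exists_step`). This is `p (n + 1)`. Every `p n` is coarser than some raw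
partition and every raw partition is coarser than some `p n`, so each group element is uniformly
continuous for the ultrametric in which two points are at distance `2⁻ⁿ` when `p n` is the first to
separate them. This ultrametric is totally bounded, and its balls are the classes of the `p n`, hence
balanced. Its completion, with the extended action and the image of the measure, is the required model
(`nonempty_model_of_metric`, `nonempty_model_of_colourings`).
-/

/-! ### From an ultrametric to a compact model -/

open UniformSpace in
/-- The strong triangle inequality passes to the completion. -/
theorem dist_completion_le_max {Y : Type*} [MetricSpace Y]
    (hultra : ∀ x y z : Y, dist x z ≤ max (dist x y) (dist y z)) (a b c : Completion Y) :
    dist a c ≤ max (dist a b) (dist b c) := by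
  refine Completion.induction_on₃ a b c (isClosed_le (by fun_prop) (by fun_prop)) ?_
  intro x y z
  simpa only [Completion.dist_eq] using hultra x y z

open UniformSpace in
/-- A totally bounded ultrametric with balanced balls, on a standard Borel copy `Y` of a conull
invariant set, for which `Γ` acts by uniformly continuous maps, yields a model on its completion. By
the strong triangle inequality, every closed ball of the completion has a centre in `Y`. -/
theorem nonempty_model_of_metric {Γ X Y : Type} [Group Γ] [MeasurableSpace X]
    (μ : Measure X) (aX : Γ → X → X) (hmeas : ∀ g : Γ, Measurable (aX g))
    (hone : ∀ x : X, aX 1 x = x) (hmul : ∀ (g h : Γ) (x : X), aX (g * h) x = aX g (aX h x))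
    (hpmp : ∀ g : Γ, μ.map (aX g) = μ)
    [MeasurableSpace Y] [StandardBorelSpace Y] [MetricSpace Y] [OpensMeasurableSpace Y]
    (ν : Measure Y) [IsProbabilityMeasure ν] (ι : Y → X) (hι : MeasurableEmbedding ι)
    (hν : ν.map ι = μ) (aY : Γ → Y → Y) (hequiv : ∀ g y, ι (aY g y) = aX g (ι y))
    (huc : ∀ g, UniformContinuous (aY g)) (htb : TotallyBounded (univ : Set Y))
    (hultra : ∀ x y z : Y, dist x z ≤ max (dist x y) (dist y z))
    (hball : ∀ ε : ℝ, 0 < ε → ∀ x y : Y,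
      ν (Metric.closedBall x ε) ≤ 3 * ν (Metric.closedBall y ε)) :
    Nonempty (TopologicalModel Γ μ aX) := by
  have : Nonempty Y := nonempty_of_isProbabilityMeasure ν
  let : MeasurableSpace (Completion Y) := borel _
  have : BorelSpace (Completion Y) := ⟨rfl⟩
  have hcomp : CompactSpace (Completion Y) := by
    refine ⟨isCompact_iff_totallyBounded_isComplete.2
      ⟨?_, completeSpace_iff_isComplete_univ.1 inferInstance⟩⟩
    have h := (htb.image (Completion.uniformContinuous_coe Y)).closure
    rwa [image_univ, (Completion.denseRange_coe (α := Y)).closure_range] at h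
  let f : Y → Completion Y := fun y => (y : Completion Y)
  have hfc : Measurable f := (Completion.continuous_coe Y).measurable
  -- an injective measurable map between standard Borel spaces is a measurable embedding
  have hf : MeasurableEmbedding f := hfc.measurableEmbedding (Completion.coe_injective Y)
  have aYm : ∀ g, Measurable (aY g) := fun g => by
    rw [← hι.measurable_comp_iff, show ι ∘ aY g = aX g ∘ ι from funext fun y => hequiv g y]
    exact (hmeas g).comp hι.measurable
  obtain ⟨ιi, hιim, hιi⟩ := hι.exists_measurable_extend measurable_id (fun _ => inferInstance)
  obtain ⟨fi, hfim, hfi⟩ := hf.exists_measurable_extend measurable_id (fun _ => inferInstance)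
  have hιi' : ∀ y, ιi (ι y) = y := fun y => congrFun hιi y
  have hfi' : ∀ y, fi (f y) = y := fun y => congrFun hfi y
  have aYone : aY 1 = id := by
    funext y; apply hι.injective; rw [hequiv, hone]; rfl
  have aYmul : ∀ g h, aY (g * h) = aY g ∘ aY h := by
    intro g h; funext y; apply hι.injective
    rw [hequiv, hmul, Function.comp, hequiv, hequiv]
  have aYpmp : ∀ g, ν.map (aY g) = ν := by
    intro g
    have h : (ν.map (aY g)).map ι = ν.map ι := by
      rw [Measure.map_map hι.measurable (aYm g)]
      have : ι ∘ aY g = aX g ∘ ι := funext fun y => hequiv g y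
      rw [this, ← Measure.map_map (hmeas g) hι.measurable, hν, hpmp]
    rw [← hι.comap_map (ν.map (aY g)), h, hι.comap_map]
  have hmapf : ∀ g y, Completion.map (aY g) (f y) = f (aY g y) := fun g y =>
    Completion.map_coe (huc g) y
  have hact_mul : ∀ (g h : Γ) (k : Completion Y), Completion.map (aY (g * h)) k =
      Completion.map (aY g) (Completion.map (aY h) k) := by
    intro g h k
    rw [aYmul, ← Completion.map_comp (huc g) (huc h)]; rfl
  have aYinv : ∀ g y, aY g (aY g⁻¹ y) = y := by
    intro g y
    have := congrFun (aYmul g g⁻¹) y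
    rw [mul_inv_cancel, aYone] at this
    exact this.symm
  have hκball : ∀ (y : Y) (ε : ℝ), (ν.map f) (Metric.closedBall (f y) ε) =
      ν (Metric.closedBall y ε) := by
    intro y ε
    rw [Measure.map_apply hfc measurableSet_closedBall]
    congr 1
    ext z
    simp [f, Completion.dist_eq]
  have hcenter : ∀ (k : Completion Y) (ε : ℝ), 0 < ε → ∃ y : Y,
      Metric.closedBall k ε = Metric.closedBall (f y) ε := by
    intro k ε hε
    obtain ⟨y, hy⟩ := (Completion.denseRange_coe (α := Y)).exists_dist_lt k hε
    refine ⟨y, ?_⟩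
    ext z
    simp only [Metric.mem_closedBall]
    constructor <;> intro hz
    · exact (dist_completion_le_max hultra z k y).trans (max_le hz hy.le)
    · exact (dist_completion_le_max hultra z y k).trans (max_le hz (by rw [dist_comm]; exact hy.le))
  exact ⟨{
    K := Completion Y
    borel := inferInstance
    compact := hcomp
    κ := ν.map f
    prob := Measure.isProbabilityMeasure_map hfc.aemeasurable
    act := fun g => Completion.map (aY g)
    cont := fun g => Completion.continuous_map
    act_one := fun k => by rw [aYone, Completion.map_id]; rfl
    act_mul := hact_mul
    pmp := fun g => by
      rw [Measure.map_map Completion.continuous_map.measurable hfc]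
      have : Completion.map (aY g) ∘ f = f ∘ aY g := funext fun y => hmapf g y
      rw [this, ← Measure.map_map hfc (aYm g), aYpmp]
    X' := range ι
    K' := range f
    φ := f ∘ ιi
    ψ := ι ∘ fi
    measX' := hι.measurableSet_range
    measK' := hf.measurableSet_range
    conullX' := by
      rw [← hν, Measure.map_apply hι.measurable hι.measurableSet_range.compl]
      simp
    conullK' := by
      rw [Measure.map_apply hfc hf.measurableSet_range.compl]
      simp
    invX' := fun g => by
      ext x
      constructor
      · rintro ⟨_, ⟨y, rfl⟩, rfl⟩
        exact ⟨aY g y, hequiv g y⟩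
      · rintro ⟨y, rfl⟩
        exact ⟨_, ⟨aY g⁻¹ y, rfl⟩, by rw [← hequiv, aYinv]⟩
    invK' := fun g => by
      ext x
      constructor
      · rintro ⟨_, ⟨y, rfl⟩, rfl⟩
        exact ⟨aY g y, (hmapf g y).symm⟩
      · rintro ⟨y, rfl⟩
        exact ⟨_, ⟨aY g⁻¹ y, rfl⟩, by rw [hmapf, aYinv]⟩
    measφ := hfc.comp hιim
    measψ := hι.measurable.comp hfim
    mapsφ := fun x _ => ⟨ιi x, rfl⟩
    leftInv := by
      rintro _ ⟨y, rfl⟩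
      simp [hιi', hfi']
    mapsψ := fun k _ => ⟨fi k, rfl⟩
    rightInv := by
      rintro _ ⟨y, rfl⟩
      simp [hιi', hfi']
    pushforward := by
      rw [← hν, Measure.map_map (hfc.comp hιim) hι.measurable]
      congr 1
      funext y
      simp [hιi']
    equivariant := by
      rintro g _ ⟨y, rfl⟩
      simp [← hequiv, hιi', hmapf]
    ball_comparable := by
      intro ε hε k l
      obtain ⟨x, hx⟩ := hcenter k ε hε
      obtain ⟨y, hy⟩ := hcenter l ε hε
      rw [hx, hy, hκball, hκball]
      exact hball ε hε x y }⟩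

/-- The colours `p n` define the ultrametric `dist x y = 2⁻ⁿ`, with `n` the first index such that
`p n x ≠ p n y`. Its balls are the colour classes, so a separating refining sequence of finite
partitions with balanced classes, continuous for the action in the sense of `pact`, gives a
model. -/
theorem nonempty_model_of_colourings {Γ X Y : Type} [Group Γ] [MeasurableSpace X]
    (μ : Measure X) (aX : Γ → X → X) (hmeas : ∀ g : Γ, Measurable (aX g))
    (hone : ∀ x : X, aX 1 x = x) (hmul : ∀ (g h : Γ) (x : X), aX (g * h) x = aX g (aX h x))
    (hpmp : ∀ g : Γ, μ.map (aX g) = μ)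
    [MeasurableSpace Y] [StandardBorelSpace Y]
    (ν : Measure Y) [IsProbabilityMeasure ν] (ι : Y → X) (hι : MeasurableEmbedding ι)
    (hν : ν.map ι = μ) (aY : Γ → Y → Y) (hequiv : ∀ g y, ι (aY g y) = aX g (ι y))
    (p : ℕ → Y → ℕ) (pmeas : ∀ n, Measurable (p n)) (pfin : ∀ n, (range (p n)).Finite)
    (pzero : ∀ x y, p 0 x = p 0 y)
    (prefine : ∀ n x y, p (n + 1) x = p (n + 1) y → p n x = p n y)
    (psep : ∀ x y, (∀ n, p n x = p n y) → x = y)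
    (pact : ∀ g n, ∃ m, ∀ x y, p m x = p m y → p n (aY g x) = p n (aY g y))
    (pball : ∀ n x y, ν {z | p n z = p n x} ≤ 3 * ν {z | p n z = p n y}) :
    Nonempty (TopologicalModel Γ μ aX) := by
  let : MetricSpace (ℕ → ℕ) := PiNat.metricSpaceNatNat
  let F : Y → ℕ → ℕ := fun y n => p n y
  have hFinj : Function.Injective F := fun x y h => psep x y fun n => congrFun h n
  have hFm : Measurable F := measurable_pi_lambda _ pmeas
  let : MetricSpace Y := MetricSpace.induced F hFinj inferInstance
  have hFu : IsUniformInducing F := ⟨rfl⟩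
  have hopens : OpensMeasurableSpace Y := by
    refine ⟨MeasurableSpace.generateFrom_le ?_⟩
    rintro s hs
    obtain ⟨t, ht, rfl⟩ := hFu.isInducing.isOpen_iff.1 hs
    exact hFm ht.measurableSet
  have hdist : ∀ x y : Y, dist x y = dist (F x) (F y) := fun x y => rfl
  have prefine' : ∀ n m x y, n ≤ m → p m x = p m y → p n x = p n y := by
    intro n m x y hnm
    induction hnm with
    | refl => exact id
    | step _ ih => exact fun h => ih (prefine _ _ _ h)
  -- a ball of radius `2⁻ⁿ⁻¹` is a single colour class of `p n`, since `p` is refining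
  have hcyl : ∀ n (x y : Y), dist x y ≤ (1 / 2 : ℝ) ^ (n + 1) ↔ p n x = p n y := by
    intro n x y
    rw [hdist]
    refine (PiNat.mem_cylinder_iff_dist_le (E := fun _ => ℕ)).symm.trans ?_
    rw [PiNat.mem_cylinder_iff]
    exact ⟨fun h => h n n.lt_succ_self,
      fun h i hi => prefine' i n x y (Nat.lt_succ_iff.1 hi) h⟩
  have hle : ∀ x y : Y, dist x y ≤ 1 / 2 := fun x y => by
    have := (hcyl 0 x y).2 (pzero x y)
    simpa using this
  have hval : ∀ x y : Y, x ≠ y → ∃ n : ℕ, dist x y = (1 / 2 : ℝ) ^ n := fun x y hxy =>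
    ⟨_, PiNat.dist_eq_of_ne (E := fun _ => ℕ) (hFinj.ne hxy)⟩
  refine nonempty_model_of_metric μ aX hmeas hone hmul hpmp ν ι hι hν aY hequiv ?_ ?_ ?_ ?_
  · intro g
    rw [Metric.uniformContinuous_iff]
    intro ε hε
    obtain ⟨n, hn⟩ := exists_pow_lt_of_lt_one hε (by norm_num : (1 / 2 : ℝ) < 1)
    obtain ⟨m, hm⟩ := pact g n
    refine ⟨(1 / 2) ^ (m + 1), by positivity, fun x y hxy => ?_⟩
    refine lt_of_le_of_lt ((hcyl n _ _).2 (hm x y ((hcyl m x y).1 hxy.le))) (lt_of_le_of_lt ?_ hn)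
    exact pow_le_pow_of_le_one (by norm_num) (by norm_num) n.le_succ
  · have hc : IsCompact (univ.pi fun n => range (p n)) :=
      isCompact_univ_pi fun n => (pfin n).isCompact
    refine (totallyBounded_preimage hFu hc.totallyBounded).subset ?_
    intro y _
    simp [F]
  · intro x y z
    exact PiNat.dist_triangle_nonarch (E := fun _ => ℕ) (F x) (F y) (F z)
  · intro ε hε x y
    by_cases hε1 : 1 / 2 ≤ ε
    · have : ∀ w : Y, Metric.closedBall w ε = univ := fun w =>
        eq_univ_of_forall fun z => (hle z w).trans hε1
      rw [this, this, measure_univ]; norm_num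
    · push Not at hε1
      have hex : ∃ n : ℕ, (1 / 2 : ℝ) ^ (n + 1) ≤ ε := by
        obtain ⟨n, hn⟩ := exists_pow_lt_of_lt_one hε (by norm_num : (1 / 2 : ℝ) < 1)
        exact ⟨n, (pow_le_pow_of_le_one (by norm_num) (by norm_num) n.le_succ).trans hn.le⟩
      classical
      -- the least `n` with `2⁻ⁿ⁻¹ ≤ ε`: distances are `0` or powers of `1/2`
      let n := Nat.find hex
      have hn : (1 / 2 : ℝ) ^ (n + 1) ≤ ε := Nat.find_spec hex
      have hball : ∀ w : Y, Metric.closedBall w ε = {z | p n z = p n w} := by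
        intro w
        ext z
        rw [Metric.mem_closedBall, mem_ofPred_eq, ← hcyl]
        refine ⟨fun h => ?_, fun h => h.trans hn⟩
        by_cases hzw : z = w
        · rw [hzw, dist_self]; positivity
        obtain ⟨j, hj⟩ := hval z w hzw
        rw [hj] at h ⊢
        refine pow_le_pow_of_le_one (by norm_num) (by norm_num) ?_
        cases j with
        | zero => norm_num at h; linarith
        | succ j => exact Nat.succ_le_succ (Nat.find_min' hex h)
      rw [hball, hball]
      exact pball n x y

/-! ### Grouping small classes into balanced ones -/

theorem exists_subset_sum_mem {w : ℕ → ENNReal} {b : ENNReal} (J : Finset ℕ)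
    (hw : ∀ j ∈ J, w j < b) (hJ : b ≤ ∑ j ∈ J, w j) :
    ∃ I ⊆ J, b ≤ ∑ j ∈ I, w j ∧ ∑ j ∈ I, w j ≤ 2 * b := by
  induction J using Finset.induction_on with
  | empty => exact ⟨∅, by simp, hJ, by simp⟩
  | insert a s ha ih =>
    by_cases hs : b ≤ ∑ j ∈ s, w j
    · obtain ⟨I, hI, h⟩ := ih (fun j hj => hw j (Finset.mem_insert_of_mem hj)) hs
      exact ⟨I, hI.trans (Finset.subset_insert _ _), h⟩
    · refine ⟨insert a s, subset_rfl, hJ, ?_⟩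
      rw [Finset.sum_insert ha, two_mul]
      exact add_le_add (hw a (Finset.mem_insert_self _ _)).le (not_le.1 hs).le

/-- Finitely many weights below `b`, of total at least `b`, can be grouped so that each group has
weight in `[b, 3b]`. A group of weight in `[b, 2b]` is split off as long as the total exceeds `3b`,
which leaves a weight of at least `b`. -/
theorem exists_grouping {w : ℕ → ENNReal} {b : ENNReal} (hb : 0 < b) (J : Finset ℕ)
    (hw : ∀ j ∈ J, w j < b) (hJ : b ≤ ∑ j ∈ J, w j) :
    ∃ h : ℕ → ℕ, ∀ j ∈ J, b ≤ ∑ i ∈ J with h i = h j, w i ∧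
      ∑ i ∈ J with h i = h j, w i ≤ 3 * b := by
  induction J using Finset.strongInduction with
  | H J ih =>
    by_cases h3 : ∑ j ∈ J, w j ≤ 3 * b
    · exact ⟨fun _ => 0, fun j _ => by simpa using ⟨hJ, h3⟩⟩
    obtain ⟨I, hIJ, hI1, hI2⟩ := exists_subset_sum_mem J hw hJ
    have hne : I.Nonempty := by
      rw [Finset.nonempty_iff_ne_empty]
      rintro rfl
      simp at hI1
      exact hb.ne' hI1
    have hsum := Finset.sum_sdiff (f := w) hIJ
    have hrest : b ≤ ∑ j ∈ J \ I, w j := by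
      by_contra hlt
      apply h3
      rw [← hsum, show (3 : ENNReal) = 1 + 2 by norm_num, add_mul, one_mul]
      exact add_le_add (not_le.1 hlt).le hI2
    obtain ⟨h, hh⟩ := ih (J \ I) (Finset.sdiff_ssubset hIJ hne)
      (fun j hj => hw j (Finset.mem_sdiff.1 hj).1) hrest
    refine ⟨fun j => if j ∈ I then 0 else h j + 1, fun j hj => ?_⟩
    by_cases hjI : j ∈ I
    · have : ({i ∈ J | (if i ∈ I then 0 else h i + 1) = if j ∈ I then 0 else h j + 1}) = I := by
        ext i
        simp only [Finset.mem_filter, hjI, if_true]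
        by_cases hi : i ∈ I
        · simp [hi, hIJ hi]
        · simp [hi]
      rw [this]
      refine ⟨hI1, hI2.trans ?_⟩
      gcongr
      norm_num
    · have : ({i ∈ J | (if i ∈ I then 0 else h i + 1) = if j ∈ I then 0 else h j + 1}) =
          {i ∈ J \ I | h i = h j} := by
        ext i
        simp only [Finset.mem_filter, hjI, if_false, Finset.mem_sdiff]
        by_cases hi : i ∈ I
        · simp [hi]
        · simp [hi]
      rw [this]
      exact hh j (Finset.mem_sdiff.2 ⟨hj, hjI⟩)

/-- Suppose that the classes of the partition `q` have measure below `b` and those of the coarser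
partition `σ ∘ q` have measure at least `b`. Then an intermediate partition `ρ ∘ q` has all its
classes of measure in `[b, 3b]`: group the `q`-classes inside each `σ ∘ q`-class. -/
theorem exists_regrouping {Y : Type} [MeasurableSpace Y] (ν : Measure Y)
    (q : Y → ℕ) (hq : Measurable q) (hfin : (range q).Finite) (σ : ℕ → ℕ) {b : ENNReal}
    (hb : 0 < b) (hsmall : ∀ y, ν {z | q z = q y} < b)
    (hlarge : ∀ y, b ≤ ν {z | σ (q z) = σ (q y)}) :
    ∃ ρ : ℕ → ℕ, (∀ y z, ρ (q y) = ρ (q z) → σ (q y) = σ (q z)) ∧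
      ∀ y, b ≤ ν {z | ρ (q z) = ρ (q y)} ∧ ν {z | ρ (q z) = ρ (q y)} ≤ 3 * b := by
  classical
  let R : Finset ℕ := hfin.toFinset
  let w : ℕ → ENNReal := fun j => ν (q ⁻¹' {j})
  have hR : ∀ y, q y ∈ R := fun y => by simp [R]
  have hsum : ∀ (P : ℕ → Prop) [DecidablePred P], ν {z | P (q z)} = ∑ j ∈ R with P j, w j := by
    intro P _
    have : {z | P (q z)} = q ⁻¹' (R.filter P : Finset ℕ) := by
      ext z; simp [hR z]
    rw [this]
    exact (sum_measure_preimage_singleton _ fun j _ => hq (measurableSet_singleton j)).symm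
  have key : ∀ v, ∃ h : ℕ → ℕ, v ∈ σ '' range q → ∀ j ∈ ({j ∈ R | σ j = v} : Finset ℕ),
      b ≤ ∑ i ∈ {j ∈ R | σ j = v} with h i = h j, w i ∧
      ∑ i ∈ {j ∈ R | σ j = v} with h i = h j, w i ≤ 3 * b := by
    intro v
    by_cases hv : v ∈ σ '' range q
    · obtain ⟨_, ⟨y, rfl⟩, rfl⟩ := hv
      obtain ⟨h, hh⟩ := exists_grouping (w := w) hb {j ∈ R | σ j = σ (q y)}
        (by
          intro j hj
          obtain ⟨z, rfl⟩ : j ∈ range q := by simpa [R] using (Finset.mem_filter.1 hj).1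
          exact hsmall z)
        (by rw [← hsum fun j => σ j = σ (q y)]; exact hlarge y)
      exact ⟨h, fun _ => hh⟩
    · exact ⟨id, fun h => absurd h hv⟩
  choose h hh using key
  refine ⟨fun j => Nat.pair (σ j) (h (σ j) j), fun y z hyz => (Nat.pair_eq_pair.1 hyz).1, ?_⟩
  intro y
  have h1 := hh (σ (q y)) ⟨_, ⟨y, rfl⟩, rfl⟩ (q y) (by simp [hR y])
  have h2 : ν {z | Nat.pair (σ (q z)) (h (σ (q z)) (q z)) =
      Nat.pair (σ (q y)) (h (σ (q y)) (q y))} =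
      ∑ i ∈ {j ∈ R | σ j = σ (q y)} with h (σ (q y)) i = h (σ (q y)) (q y), w i := by
    rw [Finset.filter_filter, ← hsum fun i => σ i = σ (q y) ∧ h (σ (q y)) i = h (σ (q y)) (q y)]
    congr 1
    ext z
    simp only [mem_ofPred_eq, Nat.pair_eq_pair]
    refine and_congr_right fun hz => ?_
    rw [hz]
  rw [h2]
  exact h1

/-! ### The raw partitions generated by a sequence of sets -/

open Classical in
/-- The colour of `x` in the partition generated by the first `n` sets of the sequence `A`: the
memberships `x ∈ A 0, …, x ∈ A (n - 1)` written as binary digits. -/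
noncomputable def raw {X : Type} (A : ℕ → Set X) : ℕ → X → ℕ
  | 0, _ => 0
  | n + 1, x => 2 * raw A n x + if x ∈ A n then 1 else 0

theorem raw_eq_iff {X : Type} (A : ℕ → Set X) (n : ℕ) (x y : X) :
    raw A n x = raw A n y ↔ ∀ i < n, (x ∈ A i ↔ y ∈ A i) := by
  induction n with
  | zero => simp [raw]
  | succ n ih =>
    rw [Nat.forall_lt_succ_right, ← ih]
    simp only [raw]
    by_cases hx : x ∈ A n <;> by_cases hy : y ∈ A n <;> simp [hx, hy] <;> omega

theorem raw_lt {X : Type} (A : ℕ → Set X) (n : ℕ) (x : X) : raw A n x < 2 ^ n := by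
  induction n with
  | zero => simp [raw]
  | succ n ih =>
    simp only [raw]
    split_ifs <;> omega

theorem raw_range_finite {X : Type} (A : ℕ → Set X) (n : ℕ) : (range (raw A n)).Finite :=
  (finite_Iio (2 ^ n)).subset (range_subset_iff.2 (raw_lt A n))

theorem measurable_raw {X : Type} [MeasurableSpace X] (A : ℕ → Set X)
    (hA : ∀ i, MeasurableSet (A i)) (n : ℕ) : Measurable (raw A n) := by
  classical
  induction n with
  | zero => exact measurable_const
  | succ n ih =>
    exact (ih.const_mul 2).add (Measurable.ite (hA n) measurable_const measurable_const)

theorem raw_mono {X : Type} (A : ℕ → Set X) {m n : ℕ} (h : m ≤ n) {x y : X}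
    (hxy : raw A n x = raw A n y) : raw A m x = raw A m y :=
  (raw_eq_iff A m x y).2 fun i hi => (raw_eq_iff A n x y).1 hxy i (hi.trans_le h)

/-- For an atomless measure the classes of the raw partitions of a point-separating sequence become
uniformly small: otherwise the decreasing sets `T m` of points with a class of measure at least `b`
have a common point, and the classes of this point shrink to an atom. -/
theorem exists_raw_small {Y : Type} [MeasurableSpace Y] (ν : Measure Y)
    [IsFiniteMeasure ν] (A : ℕ → Set Y) (hA : ∀ i, MeasurableSet (A i))
    (hsep : ∀ x y, (∀ i, x ∈ A i ↔ y ∈ A i) → x = y) (hatom : ∀ y, ν {y} = 0)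
    {b : ENNReal} (hb : 0 < b) : ∃ m, ∀ y, ν {z | raw A m z = raw A m y} < b := by
  by_contra! hcon
  have hclass : ∀ m y, MeasurableSet {z | raw A m z = raw A m y} := fun m y =>
    measurable_raw A hA m (measurableSet_singleton _)
  -- `T m` is a union of classes, hence of measure at least `b` once nonempty
  let T : ℕ → Set Y := fun m => {y | b ≤ ν {z | raw A m z = raw A m y}}
  have hTm : ∀ m, MeasurableSet (T m) := fun m =>
    measurable_raw A hA m (MeasurableSet.of_discrete (s := {j | b ≤ ν {z | raw A m z = j}}))
  have hTanti : Antitone T := fun m n hmn y hy =>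
    le_trans (show b ≤ _ from hy) (measure_mono fun z hz => raw_mono A hmn hz)
  have hTb : ∀ m, b ≤ ν (T m) := fun m => by
    obtain ⟨y, hy⟩ := hcon m
    refine hy.trans (measure_mono fun z hz => ?_)
    change b ≤ _
    rwa [show raw A m z = raw A m y from hz]
  have hinter : b ≤ ν (⋂ m, T m) :=
    ge_of_tendsto' (tendsto_measure_iInter_atTop (fun m => (hTm m).nullMeasurableSet) hTanti
      ⟨0, measure_ne_top _ _⟩) hTb
  obtain ⟨y, hy⟩ := nonempty_of_measure_ne_zero (hb.trans_le hinter).ne'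
  have hy' : ∀ m, b ≤ ν {z | raw A m z = raw A m y} := fun m => mem_iInter.1 hy m
  have hsing : (⋂ m, {z | raw A m z = raw A m y}) = {y} := by
    ext z
    simp only [mem_iInter, mem_singleton_iff, mem_ofPred_eq]
    refine ⟨fun h => hsep z y fun i => ?_, fun h m => by rw [h]⟩
    exact (raw_eq_iff A (i + 1) z y).1 (h (i + 1)) i i.lt_succ_self
  have hlim : b ≤ ν (⋂ m, {z | raw A m z = raw A m y}) :=
    ge_of_tendsto' (tendsto_measure_iInter_atTop (fun m => (hclass m y).nullMeasurableSet)
      (fun m n hmn z hz => raw_mono A hmn hz) ⟨0, measure_ne_top _ _⟩) hy'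
  rw [hsing, hatom] at hlim
  exact hb.not_ge hlim

theorem exists_raw_lower {Y : Type} [Nonempty Y] [MeasurableSpace Y] (ν : Measure Y)
    (A : ℕ → Set Y) (hpos : ∀ n y, ν {z | raw A n z = raw A n y} ≠ 0) (n : ℕ) :
    ∃ b, 0 < b ∧ ∀ y, b ≤ ν {z | raw A n z = raw A n y} := by
  obtain ⟨_, ⟨y, rfl⟩, hy⟩ := exists_min_image (range (raw A n))
    (fun j => ν {z | raw A n z = j}) (raw_range_finite A n) (range_nonempty _)
  exact ⟨_, pos_iff_ne_zero.2 (hpos n y), fun z => hy _ ⟨z, rfl⟩⟩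

/-- A partition `s.2 ∘ raw A s.1` coarser than a raw one has a refinement `t.2 ∘ raw A t.1` of the
same kind which also refines `raw A k` and whose classes have measures within a factor `3`. -/
theorem exists_step {Y : Type} [Nonempty Y] [MeasurableSpace Y] (ν : Measure Y)
    [IsFiniteMeasure ν] (A : ℕ → Set Y) (hA : ∀ i, MeasurableSet (A i))
    (hsep : ∀ x y, (∀ i, x ∈ A i ↔ y ∈ A i) → x = y) (hatom : ∀ y, ν {y} = 0)
    (hpos : ∀ n y, ν {z | raw A n z = raw A n y} ≠ 0) (k : ℕ) (s : ℕ × (ℕ → ℕ)) :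
    ∃ t : ℕ × (ℕ → ℕ),
      (∀ y z, t.2 (raw A t.1 y) = t.2 (raw A t.1 z) →
        s.2 (raw A s.1 y) = s.2 (raw A s.1 z) ∧ raw A k y = raw A k z) ∧
      ∀ y z, ν {u | t.2 (raw A t.1 u) = t.2 (raw A t.1 y)} ≤
        3 * ν {u | t.2 (raw A t.1 u) = t.2 (raw A t.1 z)} := by
  -- every class of the common refinement `r` below contains a class of `raw A M`
  let M := max s.1 k
  obtain ⟨b, hb, hbl⟩ := exists_raw_lower ν A hpos M
  obtain ⟨m, hm⟩ := exists_raw_small ν A hA hsep hatom hb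
  let N := max m M
  let r : Y → ℕ := fun y => Nat.pair (s.2 (raw A s.1 y)) (raw A k y)
  have hrM : ∀ y z, raw A M y = raw A M z → r y = r z := fun y z h => by
    simp only [r, raw_mono A (le_max_left s.1 k) h, raw_mono A (le_max_right s.1 k) h]
  have hr : r.FactorsThrough (raw A N) := fun y z h =>
    hrM y z (raw_mono A (le_max_right m M) h)
  let σ : ℕ → ℕ := Function.extend (raw A N) r 0
  have hσ : ∀ y, σ (raw A N y) = r y := fun y => hr.extend_apply 0 y
  obtain ⟨ρ, hρ1, hρ2⟩ := exists_regrouping ν (raw A N) (measurable_raw A hA N)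
    (raw_range_finite A N) σ hb
    (fun y => (measure_mono fun z hz => raw_mono A (le_max_left m M) hz).trans_lt (hm y))
    (fun y => (hbl y).trans (measure_mono fun z hz => by
      rw [mem_ofPred_eq, hσ, hσ]; exact hrM z y hz))
  refine ⟨(N, ρ), fun y z h => ?_, fun y z => (hρ2 y).2.trans (by gcongr; exact (hρ2 z).1)⟩
  have := hρ1 y z h
  rw [hσ, hσ] at this
  exact Nat.pair_eq_pair.1 this

/-- The sequence of balanced partitions in the atomless case. Each `p n` is coarser than some raw
partition and `p (n + 1)` is finer than the `n`-th raw one, so invariance of the raw partitions up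
to refinement passes to `p`. -/
theorem exists_colourings {Γ Y : Type} [Nonempty Y] [MeasurableSpace Y] (ν : Measure Y)
    [IsFiniteMeasure ν] (aY : Γ → Y → Y) (A : ℕ → Set Y) (hA : ∀ i, MeasurableSet (A i))
    (hsep : ∀ x y, (∀ i, x ∈ A i ↔ y ∈ A i) → x = y) (hatom : ∀ y, ν {y} = 0)
    (hpos : ∀ n y, ν {z | raw A n z = raw A n y} ≠ 0)
    (hinv : ∀ g n, ∃ m, ∀ x y, raw A m x = raw A m y → raw A n (aY g x) = raw A n (aY g y)) :
    ∃ p : ℕ → Y → ℕ, (∀ n, Measurable (p n)) ∧ (∀ n, (range (p n)).Finite) ∧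
      (∀ x y, p 0 x = p 0 y) ∧
      (∀ n x y, p (n + 1) x = p (n + 1) y → p n x = p n y) ∧
      (∀ x y, (∀ n, p n x = p n y) → x = y) ∧
      (∀ g n, ∃ m, ∀ x y, p m x = p m y → p n (aY g x) = p n (aY g y)) ∧
      (∀ n x y, ν {z | p n z = p n x} ≤ 3 * ν {z | p n z = p n y}) := by
  choose F hF1 hF2 using exists_step ν A hA hsep hatom hpos
  let S : ℕ → ℕ × (ℕ → ℕ) := fun n => Nat.rec (0, id) F n
  let p : ℕ → Y → ℕ := fun n y => (S n).2 (raw A (S n).1 y)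
  have hp : ∀ n x y, p (n + 1) x = p (n + 1) y → p n x = p n y ∧ raw A n x = raw A n y :=
    fun n x y h => hF1 n (S n) x y h
  refine ⟨p, fun n => Measurable.of_discrete.comp (measurable_raw A hA _), fun n => ?_,
    fun x y => rfl, fun n x y h => (hp n x y h).1, fun x y h => hsep x y fun i => ?_,
    fun g n => ?_, fun n x y => ?_⟩
  · exact ((raw_range_finite A (S n).1).image (S n).2).subset
      (range_subset_iff.2 fun y => ⟨_, ⟨y, rfl⟩, rfl⟩)
  · exact (raw_eq_iff A (i + 1) x y).1 (hp (i + 1) x y (h (i + 2))).2 i i.lt_succ_self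
  · obtain ⟨m, hm⟩ := hinv g (S n).1
    exact ⟨m + 1, fun x y h => congrArg (S n).2 (hm x y (hp m x y h).2)⟩
  · cases n with
    | zero =>
      have h : ∀ w : Y, {z | p 0 z = p 0 w} = univ := fun w => eq_univ_of_forall fun z => rfl
      rw [h, h]
      exact le_mul_of_one_le_left' (by norm_num)
    | succ n => exact hF2 n (S n) x y

/-! ### The two cases -/

/-- If `x` is an atom, ergodicity makes its orbit conull; all points of the orbit have equal mass,
so it is finite, and the partition into points gives the model. -/
theorem nonempty_model_of_atom {Γ X : Type} [Group Γ] [Countable Γ] [MeasurableSpace X]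
    [StandardBorelSpace X] (μ : Measure X) [IsProbabilityMeasure μ] (aX : Γ → X → X)
    (hmeas : ∀ g : Γ, Measurable (aX g)) (hone : ∀ x : X, aX 1 x = x)
    (hmul : ∀ (g h : Γ) (x : X), aX (g * h) x = aX g (aX h x))
    (hpmp : ∀ g : Γ, μ.map (aX g) = μ)
    (herg : ∀ A : Set X, MeasurableSet A → (∀ g : Γ, aX g ⁻¹' A = A) → μ A = 0 ∨ μ A = 1)
    (x : X) (hx : μ {x} ≠ 0) : Nonempty (TopologicalModel Γ μ aX) := by
  let O : Set X := range fun g => aX g x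
  have hxO : x ∈ O := ⟨1, hone x⟩
  have hOc : O.Countable := countable_range _
  have hOm : MeasurableSet O := hOc.measurableSet
  have hinv : ∀ g y, aX g⁻¹ (aX g y) = y := fun g y => by
    rw [← hmul, inv_mul_cancel, hone]
  have hOg : ∀ g y, y ∈ O → aX g y ∈ O := by
    rintro g _ ⟨h, rfl⟩
    exact ⟨g * h, hmul g h x⟩
  have hO1 : μ O = 1 := by
    refine (herg O hOm fun g => ?_).resolve_left fun h =>
      hx (measure_mono_null (singleton_subset_iff.2 hxO) h)
    ext y
    refine ⟨fun h => ?_, hOg g y⟩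
    rw [← hinv g y]
    exact hOg _ _ h
  have hmass : ∀ y ∈ O, μ {y} = μ {x} := by
    rintro _ ⟨g, rfl⟩
    change μ {aX g x} = _
    conv_lhs => rw [← hpmp g]
    rw [Measure.map_apply (hmeas g) (measurableSet_singleton _)]
    congr 1
    ext y
    simp only [mem_preimage, mem_singleton_iff]
    exact ⟨fun h => by rw [← hinv g y, h, hinv], fun h => by rw [h]⟩
  have hfin : O.Finite := by
    have h := Measure.finite_const_le_meas_of_disjoint_iUnion μ (pos_iff_ne_zero.2 hx)
      (As := fun y : O => {(y : X)}) (fun y => measurableSet_singleton _)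
      (fun y z hyz => by simpa [Function.onFun, Subtype.ext_iff] using hyz)
      (measure_ne_top _ _)
    rw [eq_univ_of_forall (s := {y : O | μ {x} ≤ μ {(y : X)}}) fun y => (hmass y y.2).ge] at h
    exact finite_coe_iff.1 (finite_univ_iff.1 h)
  have : Finite O := hfin
  have hν : (μ.comap ((↑) : O → X)).map (↑) = μ := by
    rw [(MeasurableEmbedding.subtype_coe hOm).map_comap, Subtype.range_coe,
      Measure.restrict_eq_self_of_ae_mem]
    exact (prob_compl_eq_zero_iff hOm).2 hO1
  have hιm := MeasurableEmbedding.subtype_coe hOm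
  have hνp : IsProbabilityMeasure (μ.comap ((↑) : O → X)) := by
    refine ⟨?_⟩
    rw [hιm.comap_apply, image_univ, Subtype.range_coe, hO1]
  have : StandardBorelSpace O := hOm.standardBorel
  obtain ⟨e, he⟩ := exists_injective_nat O
  have hmass' : ∀ y : O, μ.comap ((↑) : O → X) {z | e z = e y} = μ {x} := fun y => by
    rw [hιm.comap_apply, ← hmass y y.2]
    congr 1
    ext z
    simp [he.eq_iff]
  refine nonempty_model_of_colourings μ aX hmeas hone hmul hpmp (μ.comap ((↑) : O → X)) (↑) hιm hν
    (fun g y => ⟨aX g y, hOg g y y.2⟩) (fun _ _ => rfl)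
    (fun n y => if n = 0 then 0 else e y) (fun n => Measurable.of_discrete)
    (fun n => toFinite _) (fun _ _ => rfl) (fun n y z h => ?_) (fun y z h => he (by simpa using h 1))
    (fun g n => ⟨1, fun y z h => ?_⟩) (fun n y z => ?_)
  · obtain rfl : y = z := he (by simpa using h)
    rfl
  · obtain rfl : y = z := he (by simpa using h)
    rfl
  · rcases n with _ | n
    · exact le_mul_of_one_le_left' (by norm_num)
    · simp only [Nat.succ_ne_zero, if_false, hmass']
      exact le_mul_of_one_le_left' (by norm_num)

/-- Proposition 3.10 of the paper: every ergodic measure-preserving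
Borel action of a countable group on a standard probability space has a compact metric
topological model in which closed balls of equal radii have measures within a factor of
`3` of each other. -/
theorem stmt10 {Γ X : Type} [Group Γ] [Countable Γ] [MeasurableSpace X]
    [StandardBorelSpace X] (μ : Measure X) [IsProbabilityMeasure μ] (aX : Γ → X → X)
    (hmeas : ∀ g : Γ, Measurable (aX g)) (hone : ∀ x : X, aX 1 x = x)
    (hmul : ∀ (g h : Γ) (x : X), aX (g * h) x = aX g (aX h x))
    (hpmp : ∀ g : Γ, μ.map (aX g) = μ)
    (herg : ∀ A : Set X, MeasurableSet A → (∀ g : Γ, aX g ⁻¹' A = A) → μ A = 0 ∨ μ A = 1) :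
    Nonempty (TopologicalModel Γ μ aX) := by
  by_cases hat : ∃ x, μ {x} ≠ 0
  · obtain ⟨x, hx⟩ := hat
    exact nonempty_model_of_atom μ aX hmeas hone hmul hpmp herg x hx
  push Not at hat
  -- the sets `A i` enumerate the translates of a countable generating family
  obtain ⟨e, he⟩ := exists_surjective_nat (Γ × ℕ)
  let G := MeasurableSpace.natGeneratingSequence X
  let A : ℕ → Set X := fun i => aX (e i).1 ⁻¹' G (e i).2
  have hA : ∀ i, MeasurableSet (A i) := fun i =>
    hmeas _ (MeasurableSpace.measurableSet_natGeneratingSequence _)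
  have hsep : ∀ x y, (∀ i, x ∈ A i ↔ y ∈ A i) → x = y := by
    intro x y h
    have hS : @MeasurableSpace.SeparatesPoints X (MeasurableSpace.generateFrom (range G)) := by
      rw [MeasurableSpace.generateFrom_natGeneratingSequence]; infer_instance
    refine MeasurableSpace.separating_of_generateFrom (range G) x y ?_
    rintro _ ⟨n, rfl⟩
    obtain ⟨i, hi⟩ := he (1, n)
    simpa [A, hi, hone] using h i
  have hAinv : ∀ g i, ∃ j, ∀ x, aX g x ∈ A i ↔ x ∈ A j := by
    intro g i
    obtain ⟨j, hj⟩ := he ((e i).1 * g, (e i).2)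
    exact ⟨j, fun x => by simp [A, hj, hmul]⟩
  have hinv : ∀ g n, ∃ m, ∀ x y, raw A m x = raw A m y →
      raw A n (aX g x) = raw A n (aX g y) := by
    intro g n
    choose j hj using hAinv g
    refine ⟨(Finset.range n).sup j + 1, fun x y h => (raw_eq_iff A n _ _).2 fun i hi => ?_⟩
    rw [hj, hj]
    exact (raw_eq_iff A _ x y).1 h _
      (Nat.lt_succ_of_le (Finset.le_sup (f := j) (Finset.mem_range.2 hi)))
  have hclass : ∀ n x, MeasurableSet {z | raw A n z = raw A n x} := fun n x =>
    measurable_raw A hA n (measurableSet_singleton _)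
  -- discard the null raw classes, so that the remaining ones have a positive minimal measure
  let X0 : Set X := {x | ∀ n, μ {z | raw A n z = raw A n x} ≠ 0}
  have hX0m : MeasurableSet X0 := by
    have : X0 = ⋂ n, raw A n ⁻¹' {j | μ {z | raw A n z = j} ≠ 0} := by ext x; simp [X0]
    rw [this]
    exact MeasurableSet.iInter fun n => measurable_raw A hA n MeasurableSet.of_discrete
  have hX0c : μ X0ᶜ = 0 := by
    have : X0ᶜ = ⋃ n, ⋃ j, ⋃ _ : μ {z | raw A n z = j} = 0, {z | raw A n z = j} := by
      ext x; simp [X0]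
    rw [this]
    simp only [measure_iUnion_null_iff]
    exact fun n j h => h
  have hX0g : ∀ g x, x ∈ X0 → aX g x ∈ X0 := by
    intro g x hx n h0
    obtain ⟨m, hm⟩ := hinv g n
    refine hx m (measure_mono_null (t := aX g ⁻¹' {z | raw A n z = raw A n (aX g x)})
      (fun z hz => hm z x hz) ?_)
    rw [← Measure.map_apply (hmeas g) (hclass n _), hpmp]
    exact h0
  have hιm := MeasurableEmbedding.subtype_coe hX0m
  let ν : Measure X0 := μ.comap (↑)
  have hν : ν.map (↑) = μ := by
    rw [hιm.map_comap, Subtype.range_coe, Measure.restrict_eq_self_of_ae_mem]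
    exact hX0c
  have hνp : IsProbabilityMeasure ν := by
    refine ⟨?_⟩
    rw [hιm.comap_apply, image_univ, Subtype.range_coe]
    exact (prob_compl_eq_zero_iff hX0m).1 hX0c
  have : Nonempty X0 := nonempty_of_isProbabilityMeasure ν
  have : StandardBorelSpace X0 := hX0m.standardBorel
  let B : ℕ → Set X0 := fun i => (↑) ⁻¹' A i
  let aY : Γ → X0 → X0 := fun g y => ⟨aX g y, hX0g g y y.2⟩
  have hraw : ∀ n (x y : X0), raw B n x = raw B n y ↔ raw A n (x : X) = raw A n (y : X) :=
    fun n x y => by rw [raw_eq_iff, raw_eq_iff]; rfl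
  obtain ⟨p, h1, h2, h3, h4, h5, h6, h7⟩ := exists_colourings ν aY B
    (fun i => measurable_subtype_coe (hA i)) (fun x y h => Subtype.ext (hsep x y h))
    (fun y => by rw [hιm.comap_apply, image_singleton, hat])
    (fun n y h0 => by
      refine y.2 n ?_
      rw [← hν, Measure.map_apply measurable_subtype_coe (hclass n _), ← h0]
      congr 1
      ext z
      exact (hraw n z y).symm)
    (fun g n => by
      obtain ⟨m, hm⟩ := hinv g n
      exact ⟨m, fun x y h => (hraw n _ _).2 (hm x y ((hraw m x y).1 h))⟩)
  exact nonempty_model_of_colourings μ aX hmeas hone hmul hpmp ν (↑) hιm hν aY (fun _ _ => rfl)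
    p h1 h2 h3 h4 h5 h6 h7
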